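/- There exists c > 0 such that for all words w and w' with letters in {1,2,3}, each of whose last two letters are different, the operator norms satisfy ‖A_w · A_{w'}‖ ≥ c · ‖A_w‖ · ‖A_{w'}‖; that is, the largest singular value is almost multiplicative along such concatenations: σ1(A_{w·w'}) ≥ c·σ1(A_w)·σ1(A_{w'}). -/

import Mathlib

/-!
All matrices `Aw w` have nonnegative entries, so `sval1` is comparable, up to a factor `3`, with
the sum of all entries (`sval1_le_entrySum`, `entrySum_le_sval1`).  The entry sum of a product is
`∑ j, (j-th column sum of the left factor) * (j-th row sum of the right factor)`, so it suffices
that the column sums of `Aw w` are comparable with each other when `w` ends in two different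
letters (`entrySum_le_colSum`).

The vector of column sums changes under right multiplication by `A a` by adding its `a`-th entry
to the other two entries.  It starts at `(1, 1, 1)`, and this move preserves the triangle
inequalities between the three entries (`colSum_triangle`).  If the column sums of `Aw u` are
`v`, and `a`, `b`, `c` are the three letters, those of `Aw (u ++ [a, b])` are `v b + v a` at `b`,
`v b + 2 * v a` at `a`, and `v c + v b + 2 * v a ≤ 2 * v b + 3 * v a` at `c`.  Each of them is at
least `v b + v a`, and their total is at most six times that.  Together with the
factor `3` above this gives the constant `1 / 18`.
-/

open Matrix MeasureTheory

noncomputable section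

abbrev M3 := Matrix (Fin 3) (Fin 3) ℝ
abbrev E3 := EuclideanSpace ℝ (Fin 3)

/-- The Rauzy generators. -/
def A : Fin 3 → M3
  | 0 => !![1,1,1; 0,1,0; 0,0,1]
  | 1 => !![1,0,0; 1,1,1; 0,0,1]
  | 2 => !![1,0,0; 0,1,0; 1,1,1]

/-- Product of the matrices along a word. -/
def Aw (w : List (Fin 3)) : M3 := (w.map A).prod

/-- Euclidean norm of a vector in `ℝ³`. -/
def enorm3 (v : Fin 3 → ℝ) : ℝ := Real.sqrt (v 0 ^ 2 + v 1 ^ 2 + v 2 ^ 2)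

/-- Largest singular value = `ℓ²` operator norm. -/
def sval1 (g : M3) : ℝ := ‖(Matrix.toEuclideanLin g).toContinuousLinearMap‖

/-- Smallest singular value (for invertible `g`): `σ₃(g) = σ₁(g⁻¹)⁻¹`. -/
def sval3 (g : M3) : ℝ := (sval1 g⁻¹)⁻¹

/-- Middle singular value (for invertible `g`): `σ₂ = |det g|·σ₁(g⁻¹)/σ₁(g)`. -/
def sval2 (g : M3) : ℝ := |g.det| * sval1 g⁻¹ / sval1 g

def basis3 (i : Fin 3) : Fin 3 → ℝ := Pi.single i 1

def omega3 (v : Fin 3 → ℝ) : ℝ := v 0 + v 1 + v 2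

def ofE : E3 → (Fin 3 → ℝ) := WithLp.equiv 2 (Fin 3 → ℝ)
def toE : (Fin 3 → ℝ) → E3 := (WithLp.equiv 2 (Fin 3 → ℝ)).symm

/-- The standard 2-simplex in `ℝ³` (with the Euclidean metric). -/
def simplex : Set E3 := {x | (∀ i, 0 ≤ ofE x i) ∧ omega3 (ofE x) = 1}

/-- The projective action of the word `w` on the simplex. -/
def fmap (w : List (Fin 3)) (x : E3) : E3 :=
  toE ((omega3 ((Aw w) *ᵥ ofE x))⁻¹ • ((Aw w) *ᵥ ofE x))

/-- The Rauzy gasket. -/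
def gasket : Set E3 :=
  ⋂ n : ℕ, ⋃ w ∈ {w : List (Fin 3) | w.length = n + 1}, fmap w '' simplex

/-- Falconer's singular value function. -/
def phi (s : ℝ) (g : M3) : ℝ :=
  if s ≤ 1 then (sval2 g / sval1 g) ^ s
  else (sval2 g / sval1 g) * (sval3 g / sval1 g) ^ (s - 1)

/-- The affinity exponent of the Rauzy semigroup. -/
def sA : ℝ :=
  sSup {s : ℝ | s ∈ Set.Ioc (0:ℝ) 2 ∧
    ¬ Summable fun w : {w : List (Fin 3) // w ≠ []} => phi s (Aw w.1)}

/-- A word has its last `k` letters not all the same. -/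
def LastNotAllSame (w : List (Fin 3)) (k : ℕ) : Prop :=
  k ≤ w.length ∧ ¬ ∃ c, ∀ x ∈ w.drop (w.length - k), x = c

/-- A word's last two letters are different. -/
def LastTwoDiff (w : List (Fin 3)) : Prop :=
  ∃ u a b, w = u ++ [a, b] ∧ a ≠ b

/-- The Cartan projection `κ(g) = (log σ₁, log σ₂, log σ₃)`. -/
def kappa (g : M3) : Fin 3 → ℝ :=
  ![Real.log (sval1 g), Real.log (sval2 g), Real.log (sval3 g)]

/-- The linear functional `ψ_s` on the Cartan algebra. -/
def psi (s : ℝ) (lam : Fin 3 → ℝ) : ℝ := (lam 0 - lam 1) + (s - 1) * (lam 0 - lam 2)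

end

/-- The sum of the entries in column `j`. -/
def colSum (M : M3) (j : Fin 3) : ℝ := ∑ i, M i j

/-- The sum of all entries; an entrywise `ℓ¹` norm for nonnegative matrices. -/
def entrySum (M : M3) : ℝ := ∑ i, ∑ j, M i j

lemma Aw_append (u v : List (Fin 3)) : Aw (u ++ v) = Aw u * Aw v := by
  simp [Aw]

lemma A_apply (a i j : Fin 3) : A a i j = if i = j ∨ i = a then 1 else 0 := by
  fin_cases a <;> fin_cases i <;> fin_cases j <;> simp [A]

lemma Aw_nonneg (w : List (Fin 3)) (i j : Fin 3) : 0 ≤ Aw w i j := by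
  induction w generalizing i j with
  | nil =>
    simp only [Aw, List.map_nil, List.prod_nil, Matrix.one_apply]
    split_ifs <;> norm_num
  | cons a w ih =>
    have h : Aw (a :: w) = A a * Aw w := by simp [Aw]
    rw [h, Matrix.mul_apply]
    refine Finset.sum_nonneg fun k _ => mul_nonneg ?_ (ih k j)
    rw [A_apply]
    split_ifs <;> norm_num

lemma colSum_nonneg (w : List (Fin 3)) (j : Fin 3) : 0 ≤ colSum (Aw w) j :=
  Finset.sum_nonneg fun i _ => Aw_nonneg w i j

lemma colSum_mul (M N : M3) (j : Fin 3) :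
    colSum (M * N) j = ∑ k, colSum M k * N k j := by
  simp only [colSum, Matrix.mul_apply, Finset.sum_mul]
  exact Finset.sum_comm

lemma colSum_snoc (w : List (Fin 3)) (a j : Fin 3) :
    colSum (Aw (w ++ [a])) j =
      if j = a then colSum (Aw w) j else colSum (Aw w) j + colSum (Aw w) a := by
  have h : Aw [a] = A a := by simp [Aw]
  rw [Aw_append, h, colSum_mul]
  simp only [Fin.sum_univ_three, A_apply]
  fin_cases a <;> fin_cases j <;> simp <;> ring

/-- The column sums satisfy the triangle inequalities.  The indices need not be distinct, the
degenerate cases `i = j` and `i = k` being trivial; only `j ≠ k` is required. -/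
lemma colSum_triangle (w : List (Fin 3)) (i j k : Fin 3) (hjk : j ≠ k) :
    colSum (Aw w) i ≤ colSum (Aw w) j + colSum (Aw w) k := by
  induction w using List.reverseRecOn generalizing i j k with
  | nil => simp [colSum, Aw, Matrix.one_apply]
  | append_singleton w a ih =>
    have h0 := colSum_nonneg w
    have h01 := ih 2 0 1 (by decide)
    have h02 := ih 1 0 2 (by decide)
    have h12 := ih 0 1 2 (by decide)
    have p0 := h0 0
    have p1 := h0 1
    have p2 := h0 2
    rw [colSum_snoc, colSum_snoc, colSum_snoc]
    fin_cases a <;> fin_cases i <;> fin_cases j <;> fin_cases k <;> simp at hjk ⊢ <;> linarith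

/-- For a word ending in two different letters, the column sums are mutually comparable. -/
lemma entrySum_le_colSum {w : List (Fin 3)} (hw : LastTwoDiff w) (j : Fin 3) :
    entrySum (Aw w) ≤ 6 * colSum (Aw w) j := by
  obtain ⟨u, a, b, rfl, hab⟩ := hw
  have h : entrySum (Aw (u ++ [a, b])) = ∑ k, colSum (Aw (u ++ [a, b])) k :=
    Finset.sum_comm
  have e : u ++ [a, b] = (u ++ [a]) ++ [b] := by simp
  have p0 := colSum_nonneg u 0
  have p1 := colSum_nonneg u 1
  have p2 := colSum_nonneg u 2
  have h01 := colSum_triangle u 2 0 1 (by decide)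
  have h02 := colSum_triangle u 1 0 2 (by decide)
  have h12 := colSum_triangle u 0 1 2 (by decide)
  rw [h, Fin.sum_univ_three, e]
  simp only [colSum_snoc]
  fin_cases a <;> fin_cases b <;> fin_cases j <;> simp at hab ⊢ <;> linarith

lemma entrySum_mul (M N : M3) : entrySum (M * N) = ∑ k, colSum M k * ∑ j, N k j := by
  have h : entrySum (M * N) = ∑ j, colSum (M * N) j := Finset.sum_comm
  rw [h]
  simp only [colSum_mul, Finset.mul_sum]
  exact Finset.sum_comm

lemma sval1_le_entrySum (M : M3) (hM : ∀ i j, 0 ≤ M i j) : sval1 M ≤ entrySum M := by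
  refine ContinuousLinearMap.opNorm_le_bound _
    (Finset.sum_nonneg fun i _ => Finset.sum_nonneg fun j _ => hM i j) fun x => ?_
  -- The Euclidean norm is at most the `ℓ¹` norm.
  have l1 : ∀ y : E3, ‖y‖ ≤ ∑ i, |y i| := fun y => by
    rw [EuclideanSpace.norm_eq]
    refine Real.sqrt_le_iff.2 ⟨Finset.sum_nonneg fun i _ => abs_nonneg _, ?_⟩
    simp only [Real.norm_eq_abs]
    exact Finset.sum_sq_le_sq_sum_of_nonneg fun i _ => abs_nonneg _
  refine (l1 _).trans ?_
  rw [entrySum, Finset.sum_mul]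
  refine Finset.sum_le_sum fun i _ => ?_
  have hi : (Matrix.toEuclideanLin M).toContinuousLinearMap x i = ∑ j, M i j * x j := by
    simp [Matrix.toLpLin_apply, Matrix.mulVec, dotProduct]
  rw [hi, Finset.sum_mul]
  refine (Finset.abs_sum_le_sum_abs _ _).trans (Finset.sum_le_sum fun j _ => ?_)
  rw [abs_mul, abs_of_nonneg (hM i j)]
  exact mul_le_mul_of_nonneg_left (PiLp.norm_apply_le x j) (hM i j)

/-- Cauchy–Schwarz for the quadratic form of `M` at the all-ones vector, of squared norm `3`. -/
lemma entrySum_le_sval1 (M : M3) : entrySum M ≤ 3 * sval1 M := by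
  set T := (Matrix.toEuclideanLin M).toContinuousLinearMap with hT
  set x : E3 := WithLp.toLp 2 (fun _ => 1) with hx
  have hn : ‖x‖ * ‖x‖ = 3 := by
    rw [← sq, EuclideanSpace.norm_sq_eq]
    simp [hx]
  have hi : inner ℝ x (T x) = entrySum M := by
    simp [hx, hT, PiLp.inner_apply, entrySum, Matrix.toLpLin_apply, Matrix.mulVec, dotProduct]
  have hs : sval1 M = ‖T‖ := rfl
  calc entrySum M = inner ℝ x (T x) := hi.symm
    _ ≤ ‖x‖ * ‖T x‖ := real_inner_le_norm _ _
    _ ≤ ‖x‖ * (‖T‖ * ‖x‖) := by gcongr; exact T.le_opNorm x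
    _ = (‖x‖ * ‖x‖) * ‖T‖ := by ring
    _ = 3 * sval1 M := by rw [hn, hs]

/-- Almost multiplicativity of the top singular value along concatenations of words whose
last two letters differ. -/
theorem sval1_almost_multiplicative :
    ∃ c > (0:ℝ), ∀ w w' : List (Fin 3), LastTwoDiff w → LastTwoDiff w' →
      c * sval1 (Aw w) * sval1 (Aw w') ≤ sval1 (Aw (w ++ w')) := by
  refine ⟨1 / 18, by norm_num, fun w w' hw _ => ?_⟩
  have h1 := sval1_le_entrySum (Aw w) (Aw_nonneg w)
  have h2 := sval1_le_entrySum (Aw w') (Aw_nonneg w')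
  have h3 := entrySum_le_sval1 (Aw (w ++ w'))
  have h4 : entrySum (Aw w) * entrySum (Aw w') ≤ 6 * entrySum (Aw (w ++ w')) := by
    rw [Aw_append, entrySum_mul, Finset.mul_sum]
    conv_lhs => rw [entrySum.eq_1 (Aw w'), Finset.mul_sum]
    refine Finset.sum_le_sum fun k _ => ?_
    rw [← mul_assoc]
    exact mul_le_mul_of_nonneg_right (entrySum_le_colSum hw k)
      (Finset.sum_nonneg fun j _ => Aw_nonneg w' k j)
  have h5 : sval1 (Aw w) * sval1 (Aw w') ≤ entrySum (Aw w) * entrySum (Aw w') :=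
    mul_le_mul h1 h2 (norm_nonneg _) ((norm_nonneg _).trans h1)
  linarith
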